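/- The complete graph K_4 on four vertices is 3-degenerate but not 2-degenerate (i.e., it has degeneracy exactly 3), and α_1(K_4) = 2; consequently the bound α_1(G) ≥ n/2 for 3-degenerate graphs G is tight, so α_1(3) = 1/2. -/

import Mathlib

/-- The subgraph of `G` induced on `A` is `d`-degenerate: every nonempty (finite)
subset of `A` contains a vertex with at most `d` neighbours inside that subset. -/
def DegenOn {V : Type*} (G : SimpleGraph V) (d : ℕ) (A : Set V) : Prop :=
  ∀ S : Set V, S ⊆ A → S.Finite → S.Nonempty → ∃ v ∈ S, (S ∩ G.neighborSet v).ncard ≤ d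

/-- `G` is `d`-degenerate. -/
def Degen {V : Type*} (G : SimpleGraph V) (d : ℕ) : Prop :=
  DegenOn G d Set.univ

/-- `α_d(G)`: the maximum number of vertices of an induced `d`-degenerate subgraph of `G`. -/
noncomputable def alphaDeg {V : Type*} [Fintype V] (G : SimpleGraph V) (d : ℕ) : ℕ :=
  sSup {m : ℕ | ∃ A : Set V, DegenOn G d A ∧ A.ncard = m}

/-- `α_d(k)`: the infimum, over all finite simple graphs `G` of degeneracy exactly `k`,
of the ratio `α_d(G) / |V(G)|`. -/
noncomputable def alphaRatio (d k : ℕ) : ℝ :=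
  sInf {r : ℝ | ∃ (n : ℕ) (G : SimpleGraph (Fin n)),
    Degen G k ∧ ¬ Degen G (k - 1) ∧ r = (alphaDeg G d : ℝ) / (n : ℝ)}

/-!
Deleting vertices of small degree one at a time and putting them back in reverse order, a
`k`-degenerate graph is coloured greedily: a returning vertex has at most `k` neighbours among the
vertices already present, so if `k < ∑ i, (d i + 1)` it has at most `d i` neighbours of some colour
`i`, and joining that colour class keeps the class `d i`-degenerate. With `m` colours and all
`d i = d`, the largest class has at least `|V| / m` vertices. A complete graph is `d`-degenerate
exactly when it has at most `d + 1` vertices, so `K_{k+1}` attains this bound when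
`k + 1 = m (d + 1)`.
-/

open Set Function

theorem sum_ncard_inter_preimage_singleton {V ι : Type*} [Fintype ι] {S : Set V} (hS : S.Finite)
    (c : V → ι) : ∑ i, (S ∩ c ⁻¹' {i}).ncard = S.ncard := by
  have hdisj : Pairwise (Disjoint on fun i ↦ S ∩ c ⁻¹' {i}) := fun _ _ hij ↦
    ((disjoint_singleton.2 hij).preimage c).mono inter_subset_right inter_subset_right
  rw [← finsum_eq_sum_of_fintype, ← ncard_iUnion_of_finite (fun _ ↦ hS.inter_of_left _) hdisj,
    ← inter_iUnion, ← preimage_iUnion, iUnion_of_singleton, preimage_univ, inter_univ]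

section Degeneracy

variable {V : Type*} {G : SimpleGraph V} {d k : ℕ} {A B S : Set V}

theorem DegenOn.mono (h : DegenOn G d B) (hAB : A ⊆ B) : DegenOn G d A :=
  fun S hS ↦ h S (hS.trans hAB)

theorem degenOn_empty : DegenOn G d ∅ :=
  fun _ hS _ hne ↦ absurd (hne.mono hS) not_nonempty_empty

theorem DegenOn.insert_of_ncard_le {v : V} (h : DegenOn G d A) (hA : A.Finite)
    (hv : (A ∩ G.neighborSet v).ncard ≤ d) : DegenOn G d (insert v A) := by
  intro S hS hfin hne
  by_cases hvS : v ∈ S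
  · refine ⟨v, hvS, (ncard_le_ncard ?_ (hA.inter_of_left _)).trans hv⟩
    rintro x ⟨hxS, hvx⟩
    exact ⟨(hS hxS).resolve_left (G.ne_of_adj hvx).symm, hvx⟩
  · exact h S ((subset_insert_iff_of_notMem hvS).1 hS) hfin hne

theorem DegenOn.induction_on {P : Set V → Prop} (h : DegenOn G k S) (hS : S.Finite) (hempty : P ∅)
    (hinsert : ∀ A v, A.Finite → v ∉ A → (A ∩ G.neighborSet v).ncard ≤ k → P A → P (insert v A)) :
    P S := by
  induction hn : S.ncard generalizing S with
  | zero => rwa [(ncard_eq_zero hS).1 hn]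
  | succ n ih =>
    have hne : S.Nonempty := nonempty_of_ncard_ne_zero (by lia)
    obtain ⟨v, hvS, hv⟩ := h S Subset.rfl hS hne
    have hP : P (S \ {v}) := ih (h.mono sdiff_subset) hS.sdiff (by
      rw [ncard_sdiff_singleton_of_mem hvS, hn, Nat.add_sub_cancel])
    have hdeg : (S \ {v} ∩ G.neighborSet v).ncard ≤ k :=
      (ncard_le_ncard (inter_subset_inter_left _ sdiff_subset) (hS.inter_of_left _)).trans hv
    rw [← insert_sdiff_self_of_mem hvS]
    exact hinsert _ v hS.sdiff (fun hvA ↦ hvA.2 rfl) hdeg hP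

theorem DegenOn.exists_coloring {ι : Type*} [Fintype ι] {d : ι → ℕ} (h : DegenOn G k S)
    (hS : S.Finite) (hk : k < ∑ i, (d i + 1)) :
    ∃ c : V → ι, ∀ i, DegenOn G (d i) (S ∩ c ⁻¹' {i}) := by
  classical
  refine h.induction_on (P := fun S ↦ ∃ c : V → ι, ∀ i, DegenOn G (d i) (S ∩ c ⁻¹' {i})) hS ?_ ?_
  · have : Nonempty ι := by
      by_contra! hι
      simp at hk
    exact ⟨fun _ ↦ Classical.arbitrary ι, fun i ↦ by simpa only [empty_inter] using degenOn_empty⟩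
  · rintro A v hA hvA hv ⟨c, hc⟩
    obtain ⟨i, -, hi⟩ : ∃ i ∈ Finset.univ,
        (A ∩ G.neighborSet v ∩ c ⁻¹' {i}).ncard < d i + 1 := by
      refine Finset.exists_lt_of_sum_lt ?_
      rw [sum_ncard_inter_preimage_singleton (hA.inter_of_left _)]
      exact hv.trans_lt hk
    have hclass (j : ι) : A ∩ update c v i ⁻¹' {j} = A ∩ c ⁻¹' {j} := by
      ext x
      refine and_congr_right fun hx ↦ ?_
      rw [mem_preimage, update_of_ne (ne_of_mem_of_not_mem hx hvA), mem_preimage]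
    refine ⟨update c v i, fun j ↦ ?_⟩
    obtain rfl | hij := eq_or_ne i j
    · rw [insert_inter_of_mem (by simp), hclass]
      refine (hc i).insert_of_ncard_le (hA.inter_of_left _) ?_
      rw [inter_right_comm]
      exact Nat.lt_succ_iff.1 hi
    · rw [insert_inter_of_notMem (by simpa using hij), hclass]
      exact hc j

theorem nonempty_of_not_degen (h : ¬ Degen G d) : Nonempty V := by
  by_contra! hV
  exact h fun _ _ _ ⟨v, _⟩ ↦ isEmptyElim v

end Degeneracy

section AlphaDeg

variable {V : Type*} [Fintype V] {G : SimpleGraph V} {d k : ℕ}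

theorem DegenOn.ncard_le_alphaDeg {A : Set V} (h : DegenOn G d A) : A.ncard ≤ alphaDeg G d := by
  refine le_csSup ⟨Nat.card V, ?_⟩ ⟨A, h, rfl⟩
  rintro _ ⟨B, -, rfl⟩
  exact ncard_le_card B

theorem alphaDeg_le {b : ℕ} (h : ∀ A : Set V, DegenOn G d A → A.ncard ≤ b) : alphaDeg G d ≤ b := by
  refine csSup_le' ?_
  rintro _ ⟨A, hA, rfl⟩
  exact h A hA

theorem Degen.card_le_sum_alphaDeg {ι : Type*} [Fintype ι] {d : ι → ℕ} (h : Degen G k)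
    (hk : k < ∑ i, (d i + 1)) : Fintype.card V ≤ ∑ i, alphaDeg G (d i) := by
  obtain ⟨c, hc⟩ := DegenOn.exists_coloring h finite_univ hk
  calc
    Fintype.card V = ∑ i, (univ ∩ c ⁻¹' {i}).ncard := by
      rw [sum_ncard_inter_preimage_singleton finite_univ, ncard_univ, Nat.card_eq_fintype_card]
    _ ≤ ∑ i, alphaDeg G (d i) := Finset.sum_le_sum fun i _ ↦ (hc i).ncard_le_alphaDeg

theorem Degen.card_le_mul_alphaDeg {m : ℕ} (h : Degen G k) (hk : k < m * (d + 1)) :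
    Fintype.card V ≤ m * alphaDeg G d := by
  simpa using h.card_le_sum_alphaDeg (ι := Fin m) (d := fun _ ↦ d) (by simpa using hk)

end AlphaDeg

section CompleteGraph

variable {d k : ℕ}

theorem ncard_inter_neighborSet_top {V : Type*} {S : Set V} {v : V} (hv : v ∈ S) :
    (S ∩ (⊤ : SimpleGraph V).neighborSet v).ncard = S.ncard - 1 := by
  rw [SimpleGraph.neighborSet_top, ← sdiff_eq, ncard_sdiff_singleton_of_mem hv]

theorem degenOn_top_iff {V : Type*} {A : Set V} (hA : A.Finite) :
    DegenOn (⊤ : SimpleGraph V) d A ↔ A.ncard ≤ d + 1 := by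
  constructor
  · intro h
    obtain rfl | hne := A.eq_empty_or_nonempty
    · simp
    · obtain ⟨v, hv, hdeg⟩ := h A Subset.rfl hA hne
      rw [ncard_inter_neighborSet_top hv] at hdeg
      lia
  · rintro h S hSA - ⟨v, hv⟩
    have := ncard_le_ncard hSA hA
    exact ⟨v, hv, by rw [ncard_inter_neighborSet_top hv]; lia⟩

theorem degen_top_iff {V : Type*} [Fintype V] :
    Degen (⊤ : SimpleGraph V) d ↔ Fintype.card V ≤ d + 1 := by
  rw [Degen, degenOn_top_iff finite_univ, ncard_univ, Nat.card_eq_fintype_card]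

theorem alphaDeg_top (V : Type*) [Fintype V] (d : ℕ) :
    alphaDeg (⊤ : SimpleGraph V) d = min (Fintype.card V) (d + 1) := by
  apply le_antisymm
  · refine alphaDeg_le fun A hA ↦ le_min ?_ ((degenOn_top_iff A.toFinite).1 hA)
    exact (ncard_le_card A).trans_eq Nat.card_eq_fintype_card
  · obtain ⟨A, -, hA⟩ := exists_subset_card_eq (s := (univ : Set V))
      (n := min (Fintype.card V) (d + 1)) (by simp [ncard_univ])
    rw [← hA]
    exact ((degenOn_top_iff A.toFinite).2 (by lia)).ncard_le_alphaDeg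

theorem degen_top_fin_succ : Degen (⊤ : SimpleGraph (Fin (k + 1))) k :=
  degen_top_iff.2 (Fintype.card_fin _).le

theorem not_degen_top_fin_succ (hk : 0 < k) : ¬ Degen (⊤ : SimpleGraph (Fin (k + 1))) (k - 1) := by
  rw [degen_top_iff, Fintype.card_fin]
  lia

theorem alphaDeg_top_fin_succ (hdk : d ≤ k) :
    alphaDeg (⊤ : SimpleGraph (Fin (k + 1))) d = d + 1 := by
  rw [alphaDeg_top, Fintype.card_fin]
  lia

end CompleteGraph

section AlphaRatio

variable {d k : ℕ}

theorem alphaRatio_le (hk : 0 < k) : alphaRatio d k ≤ (d + 1) / (k + 1) := by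
  have hratio : alphaRatio d k ≤
      (alphaDeg (⊤ : SimpleGraph (Fin (k + 1))) d : ℝ) / (k + 1 : ℕ) := by
    refine csInf_le ⟨0, ?_⟩
      ⟨k + 1, ⊤, degen_top_fin_succ, not_degen_top_fin_succ hk, rfl⟩
    rintro _ ⟨n, G, -, -, rfl⟩
    positivity
  refine hratio.trans ?_
  rw [alphaDeg_top]
  push_cast
  gcongr
  exact min_le_right _ _

theorem one_div_le_alphaRatio {m : ℕ} (hk : 0 < k) (hkm : k < m * (d + 1)) :
    1 / m ≤ alphaRatio d k := by
  refine le_csInf ⟨_, k + 1, ⊤, degen_top_fin_succ, not_degen_top_fin_succ hk, rfl⟩ ?_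
  rintro _ ⟨n, G, hG, hG', rfl⟩
  have hn : 0 < n := Fin.pos_iff_nonempty.2 (nonempty_of_not_degen hG')
  have hm : 0 < m := Nat.pos_of_lt_mul_right hkm
  have hcard : n ≤ m * alphaDeg G d := by
    simpa only [Fintype.card_fin] using hG.card_le_mul_alphaDeg hkm
  rw [div_le_div_iff₀ (by positivity) (by positivity), one_mul, mul_comm]
  exact_mod_cast hcard

end AlphaRatio

theorem stmt_6_general {d k m : ℕ} (hdk : d < k) (hkm : k + 1 = m * (d + 1)) :
    Degen (⊤ : SimpleGraph (Fin (k + 1))) k ∧ ¬ Degen (⊤ : SimpleGraph (Fin (k + 1))) (k - 1) ∧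
    alphaDeg (⊤ : SimpleGraph (Fin (k + 1))) d = d + 1 ∧
    alphaRatio d k = 1 / m := by
  have hk : 0 < k := hdk.pos
  refine ⟨degen_top_fin_succ, not_degen_top_fin_succ hk, alphaDeg_top_fin_succ hdk.le,
    le_antisymm ?_ (one_div_le_alphaRatio hk (by lia))⟩
  calc
    alphaRatio d k ≤ (d + 1) / (k + 1) := alphaRatio_le hk
    _ = (d + 1) / (m * (d + 1)) := by rw [show (k + 1 : ℝ) = m * (d + 1) from mod_cast hkm]
    _ = 1 / m := by field_simp

theorem stmt_6 :
    Degen (⊤ : SimpleGraph (Fin 4)) 3 ∧ ¬ Degen (⊤ : SimpleGraph (Fin 4)) 2 ∧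
    alphaDeg (⊤ : SimpleGraph (Fin 4)) 1 = 2 ∧
    alphaRatio 1 3 = 1 / 2 :=
  mod_cast stmt_6_general (d := 1) (k := 3) (m := 2) (by norm_num) (by norm_num)
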